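/- Let ω ∈ P⁺ be minuscule or quasi-minuscule and let f : P → ℂ be W_R-invariant, i.e. f(wλ) = f(λ) for all w ∈ W_R and λ ∈ P. Then for every λ ∈ P_c⁺: ∑_{ν∈W₀ω} ( a_{λ,ν} f(λ−ν) + b_{λ,ν}(1−τ₀⁻²) f(λ) ) = U_{λ,ω} f(λ) + ∑_{ν∈W₀ω with λ−ν∈P_c⁺} V_{λ,ν} f(λ−ν), where V_{λ,ν} := ∑_{μ ∈ W_{R,λ}(λ−ν)} τ_{w_μ}² (the sum over the orbit of λ−ν under the stabilizer W_{R,λ} := {w ∈ W_R : wλ = λ}) and U_{λ,ω} := ∑_{ν∈W₀ω with (λ−ν)₊=λ} τ_{w_{λ−ν}}² + (1−τ₀⁻²) ∑_{ν∈W₀ω with w_{λ−ν}λ=λ} c_{λ,ν}. -/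

import Mathlib

open scoped RealInnerProductSpace BigOperators Classical

noncomputable section

/-- Alternating composition `A ∘ B ∘ A ∘ ⋯` with `m` factors (starting with `A`). -/
def altComp {α : Type*} (A B : α → α) : ℕ → (α → α)
  | 0 => id
  | m + 1 => A ∘ altComp B A m

/-- The sign of a real number, as an integer (with `sgnZ 0 = 0`). -/
def sgnZ (x : ℝ) : ℤ := if 0 < x then 1 else if x < 0 then -1 else 0

/-- The function `v(x) = (1-t²)∫₀ˣ dy/(1-2t cos y+t²)`. -/
def mvfun (t x : ℝ) : ℝ :=
  (1 - t ^ 2) * ∫ y in (0:ℝ)..x, 1 / (1 - 2 * t * Real.cos y + t ^ 2)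

section AffineOps

variable {V : Type*} [NormedAddCommGroup V] [InnerProductSpace ℝ V]

/-- The coroot `α∨ = 2α/⟨α,α⟩`. -/
def coroot (α : V) : V := (2 / ⟪α, α⟫) • α

/-- The affine root `a = α∨ + r c` (encoded as the pair `(α, r)`), as an affine
function on `V`. -/
def aval (c : ℝ) (a : V × ℤ) (x : V) : ℝ := ⟪x, coroot a.1⟫ + a.2 * c

/-- The affine reflection `s_a(x) = x - a(x) α` attached to `a = α∨ + r c`. -/
def sAff (c : ℝ) (a : V × ℤ) (x : V) : V := x - aval c a x • a.1

/-- `w` maps the affine root `a` to the affine root `b`, i.e. `(wa)(x) = a(w⁻¹x) = b(x)`. -/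
def mapsRoot (c : ℝ) (w : Equiv.Perm V) (a b : V × ℤ) : Prop :=
  ∀ x : V, aval c a (w⁻¹ x) = aval c b x

/-- The linear part `w′` of an affine transformation `w`. -/
def linPart (w : Equiv.Perm V) (x : V) : V := w x - w 0

variable {R : Type*} [Field R]

/-- The difference-reflection operator `T̂_a`. -/
def hatT (c : ℝ) (τ : V × ℤ → R) (a : V × ℤ) (f : V → R) (x : V) : R :=
  if 0 < aval c a x then τ a * f (sAff c a x)
  else if aval c a x = 0 then τ a * f x
  else (τ a)⁻¹ * f (sAff c a x) + (τ a - (τ a)⁻¹) * f x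

/-- The discrete integral operator `J_a`. -/
def Jop (c : ℝ) (a : V × ℤ) (f : V → R) (x : V) : R :=
  if 0 < aval c a x then
    - ∑ k ∈ Finset.Icc (1 : ℤ) ⌊aval c a x⌋, f (x - k • a.1)
  else if aval c a x = 0 then 0
  else ∑ k ∈ Finset.Ico (0 : ℤ) (-⌊aval c a x⌋), f (x + k • a.1)

/-- The integral-reflection operator `I_a = τ_a s_a + (τ_a - τ_a⁻¹) J_a`. -/
def Iop (c : ℝ) (τ : V × ℤ → R) (a : V × ℤ) (f : V → R) (x : V) : R :=
  τ a * f (sAff c a x) + (τ a - (τ a)⁻¹) * Jop c a f x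

end AffineOps

/-- An irreducible reduced crystallographic root system spanning `V`, together with a
choice of positive roots, simple roots, and the highest short root. -/
structure RootSystemData (V : Type*) [NormedAddCommGroup V] [InnerProductSpace ℝ V] :
    Type _ where
  n : ℕ
  n_pos : 1 ≤ n
  rank_eq : Module.finrank ℝ V = n
  R0 : Finset V
  ne_zero : ∀ α ∈ R0, α ≠ (0 : V)
  span_top : Submodule.span ℝ (R0 : Set V) = ⊤
  reduced : ∀ α ∈ R0, ∀ t : ℝ, t • α ∈ R0 → t = 1 ∨ t = -1
  crystallographic : ∀ α ∈ R0, ∀ β ∈ R0, ∃ k : ℤ, ⟪β, coroot α⟫ = (k : ℝ)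
  reflect_mem : ∀ α ∈ R0, ∀ β ∈ R0, β - ⟪β, coroot α⟫ • α ∈ R0
  irreducible : ∀ S : Finset V, S ⊆ R0 →
      (∀ a ∈ S, ∀ b ∈ R0, b ∉ S → ⟪a, b⟫ = 0) → S = ∅ ∨ S = R0
  pos : Finset V
  pos_subset : pos ⊆ R0
  pos_or_neg : ∀ α ∈ R0, α ∈ pos ∨ -α ∈ pos
  pos_not_both : ∀ α ∈ pos, -α ∉ pos
  pos_add : ∀ α ∈ pos, ∀ β ∈ pos, α + β ∈ R0 → α + β ∈ pos
  simpleRoot : Fin n → V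
  simpleRoot_mem : ∀ j, simpleRoot j ∈ pos
  pos_natCombo : ∀ α ∈ pos, ∃ k : Fin n → ℕ, α = ∑ j, (k j : ℝ) • simpleRoot j
  hshort : V
  hshort_mem : hshort ∈ pos
  hshort_short : ∀ α ∈ R0, ‖hshort‖ ≤ ‖α‖
  hshort_highest : ∀ α ∈ R0, ‖α‖ = ‖hshort‖ →
      ∃ k : Fin n → ℕ, hshort - α = ∑ j, (k j : ℝ) • simpleRoot j

namespace RootSystemData

variable {V : Type*} [NormedAddCommGroup V] [InnerProductSpace ℝ V]
variable (D : RootSystemData V)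

/-- The weight lattice `P`. -/
def weightLattice : Set V :=
  {x : V | ∀ α ∈ D.R0, ∃ k : ℤ, ⟪x, coroot α⟫ = (k : ℝ)}

/-- The root lattice `Q`. -/
def rootLattice : Set V := (Submodule.span ℤ (D.R0 : Set V) : Set V)

/-- The coweight lattice `P∨`. -/
def coweightLattice : Set V :=
  {x : V | ∀ α ∈ D.R0, ∃ k : ℤ, ⟪x, α⟫ = (k : ℝ)}

/-- The dominant cone. -/
def dominant : Set V := {x : V | ∀ α ∈ D.pos, 0 ≤ ⟪x, coroot α⟫}

/-- `ω` is a minuscule (dominant) weight. -/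
def IsMinuscule (ω : V) : Prop :=
  ω ∈ D.weightLattice ∧ ω ∈ D.dominant ∧ ω ≠ 0 ∧
    ∀ α ∈ D.pos, ⟪ω, coroot α⟫ ≤ 1

/-- `ω` is the quasi-minuscule weight, i.e. the highest short root. -/
def IsQuasiMinuscule (ω : V) : Prop := ω = D.hshort

/-- The saturated set `P_ϑ` containing the (quasi-)minuscule weights. -/
def Ptheta : Set V :=
  {ν : V | ν ∈ D.weightLattice ∧ ∀ α ∈ D.R0, α ≠ ν → |⟪ν, coroot α⟫| ≤ 1}

/-- Half sum of the positive roots. -/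
def rhoHalf : V := (2⁻¹ : ℝ) • ∑ α ∈ D.pos, α

/-- Half sum of the positive coroots. -/
def rhoVee : V := (2⁻¹ : ℝ) • ∑ α ∈ D.pos, coroot α

/-- `(α, r)` encodes an affine root. -/
def IsAffRoot (a : V × ℤ) : Prop := a.1 ∈ D.R0

/-- `(α, r)` encodes a positive affine root. -/
def IsAffPos (a : V × ℤ) : Prop :=
  a.1 ∈ D.R0 ∧ (1 ≤ a.2 ∨ (a.2 = 0 ∧ a.1 ∈ D.pos))

/-- `(α, r)` encodes a negative affine root. -/
def IsAffNeg (a : V × ℤ) : Prop := D.IsAffPos (-a.1, -a.2)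

/-- The simple affine roots `a₀ = -ϑ∨ + c`, `a_j = α_j∨`. -/
def aSimple (j : Fin (D.n + 1)) : V × ℤ :=
  Fin.cons (α := fun _ => V × ℤ) (-D.hshort, (1 : ℤ))
    (fun i => (D.simpleRoot i, (0 : ℤ))) j

/-- The reflections generating the finite Weyl group `W₀`. -/
def W0Gens : Set (Equiv.Perm V) :=
  {e | ∃ α ∈ D.R0, ∀ x, e x = x - ⟪x, coroot α⟫ • α}

/-- The finite Weyl group `W₀`. -/
def W0 : Subgroup (Equiv.Perm V) := Subgroup.closure D.W0Gens

variable (c : ℝ)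

/-- The affine reflections generating the affine Weyl group `W_R`. -/
def AffGens : Set (Equiv.Perm V) :=
  {e | ∃ a : V × ℤ, D.IsAffRoot a ∧ ∀ x, e x = sAff c a x}

/-- The affine Weyl group `W_R`. -/
def WR : Subgroup (Equiv.Perm V) := Subgroup.closure (D.AffGens c)

/-- The translations `t_{cλ}`, `λ ∈ P`. -/
def TransGens : Set (Equiv.Perm V) :=
  {e | ∃ lam ∈ D.weightLattice, ∀ x : V, e x = x + c • lam}

/-- The extended affine Weyl group `W = W₀ ⋉ t(cP)`. -/
def Wext : Subgroup (Equiv.Perm V) :=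
  Subgroup.closure (D.AffGens c ∪ D.TransGens c)

/-- The set `R(w) = R⁺ ∩ w⁻¹(R⁻)`. -/
def RW (w : Equiv.Perm V) : Set (V × ℤ) :=
  {a | D.IsAffPos a ∧ ∃ b : V × ℤ, D.IsAffNeg b ∧ mapsRoot c w a b}

/-- The length `ℓ(w) = #R(w)`. -/
def len (w : Equiv.Perm V) : ℕ := (D.RW c w).ncard

/-- The closed fundamental alcove `A_c`. -/
def alcove : Set V := {x | ∀ a : V × ℤ, D.IsAffPos a → 0 ≤ aval c a x}

/-- `wmin x` is the unique shortest element of the affine Weyl group mapping `x` into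
the fundamental alcove. -/
def IsWmin (wmin : V → Equiv.Perm V) : Prop :=
  ∀ x : V, wmin x ∈ D.WR c ∧ (wmin x) x ∈ D.alcove c ∧
    ∀ w ∈ D.WR c, w x ∈ D.alcove c → D.len c (wmin x) < D.len c w ∨ w = wmin x

/-- One step in the Bruhat order: `w < w s_a` whenever `ℓ(w) < ℓ(w s_a)`. -/
def bruhatStep (w w' : Equiv.Perm V) : Prop :=
  ∃ a : V × ℤ, D.IsAffPos a ∧ ∃ e : Equiv.Perm V,
    (∀ x, e x = sAff c a x) ∧ w' = w * e ∧ D.len c w < D.len c w'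

/-- The Bruhat order on the affine Weyl group. -/
def bruhatLE (w w' : Equiv.Perm V) : Prop :=
  Relation.ReflTransGen (D.bruhatStep c) w w'

/-- The partial order on `V`: `x ≤ y` iff `x₊ = y₊` and `w_x ≤ w_y` (Bruhat). -/
def vle (wmin : V → Equiv.Perm V) (x y : V) : Prop :=
  (wmin x) x = (wmin y) y ∧ D.bruhatLE c (wmin x) (wmin y)

/-- The interval `[x, y]` for the order `vle`. -/
def vInterval (wmin : V → Equiv.Perm V) (x y : V) : Set V :=
  {z : V | D.vle c wmin x z ∧ D.vle c wmin z y}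

/-- The partial order `⪯` on the weight lattice:
`μ ⪯ λ` iff `λ - μ ∈ Q` and `Conv [μ₊, μ] ⊆ Conv [λ₊, λ]`. -/
def pleq (wmin : V → Equiv.Perm V) (μ lam : V) : Prop :=
  lam - μ ∈ D.rootLattice ∧
    convexHull ℝ (D.vInterval c wmin ((wmin μ) μ) μ)
      ⊆ convexHull ℝ (D.vInterval c wmin ((wmin lam) lam) lam)

section Ops

variable {R : Type*} [Field R]

/-- `τ` is a multiplicity function: nonvanishing on affine roots, and invariant
under the (extended affine) Weyl group action on the affine roots. -/
def IsMultiplicity (τ : V × ℤ → R) : Prop :=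
  (∀ a : V × ℤ, D.IsAffRoot a → τ a ≠ 0) ∧
    ∀ w ∈ D.Wext c, ∀ a b : V × ℤ, D.IsAffRoot a → D.IsAffRoot b →
      mapsRoot c w a b → τ a = τ b

/-- `τ_w = ∏_{a ∈ R(w)} τ_a`. -/
def tauw (τ : V × ℤ → R) (w : Equiv.Perm V) : R := ∏ᶠ a ∈ D.RW c w, τ a

/-- `τ₀`, the multiplicity of the affine simple root `a₀`. -/
def tauZero (τ : V × ℤ → R) : R := τ (-D.hshort, (1 : ℤ))

/-- The operator `I_{j₁} ∘ ⋯ ∘ I_{jℓ}` attached to a word in the simple reflections. -/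
def wordOp (τ : V × ℤ → R) (l : List (Fin (D.n + 1))) : (V → R) → V → R :=
  (l.map fun j => Iop c τ (D.aSimple j)).foldr (· ∘ ·) id

/-- `l` is a reduced word for `w`, i.e. `w = s_{j₁} ∘ ⋯ ∘ s_{jℓ}` with `ℓ = ℓ(w)`. -/
def IsReducedWord (w : Equiv.Perm V) (l : List (Fin (D.n + 1))) : Prop :=
  l.length = D.len c w ∧
    ∀ x : V, w x = ((l.map fun j => sAff c (D.aSimple j)).foldr (· ∘ ·) id) x

/-- `e∨_τ(η) = ∏_{α ∈ R₀⁺} τ_{α∨}^{⟨η,α∨⟩}`. -/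
def etau (τ : V × ℤ → R) (η : V) : R :=
  ∏ α ∈ D.pos, τ (α, (0 : ℤ)) ^ ⌊⟪η, coroot α⟫⌋

/-- `h∨_τ = τ₀² e∨_τ(ϑ)`. -/
def hvee (τ : V × ℤ → R) : R := D.tauZero τ ^ 2 * D.etau τ D.hshort

/-- `θ(μ) = #{b ∈ R(w_μ) : b(μ) = -2}`. -/
def theta (wmin : V → Equiv.Perm V) (μ : V) : ℕ :=
  {b : V × ℤ | b ∈ D.RW c (wmin μ) ∧ aval c b μ = -2}.ncard

/-- The coefficient `c_{λ,η} = θ(λ-η) e∨_τ(η) (h∨_τ)^{-sign⟨λ,η∨⟩}`. -/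
def ccoef (τ : V × ℤ → R) (wmin : V → Equiv.Perm V) (lam η : V) : R :=
  (D.theta c wmin (lam - η) : R) * D.etau τ η *
    D.hvee τ ^ (-sgnZ ⟪lam, coroot η⟫)

/-- The coefficient `a_{λ,ν} = τ_{w_{w_λ(λ-ν)}} τ_{w_{w_λ(λ-ν)} w_λ} τ_{w_λ}⁻¹`. -/
def acoef (τ : V × ℤ → R) (wmin : V → Equiv.Perm V) (lam ν : V) : R :=
  D.tauw c τ (wmin ((wmin lam) (lam - ν))) *
    D.tauw c τ (wmin ((wmin lam) (lam - ν)) * wmin lam) *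
    (D.tauw c τ (wmin lam))⁻¹

/-- The coefficient `b_{λ,ν}`. -/
def bcoef (τ : V × ℤ → R) (wmin : V → Equiv.Perm V) (lam ν : V) : R :=
  if (wmin (lam - ν)) (lam - ν) = (wmin lam) lam then
    D.tauw c τ (wmin ((wmin lam) (lam - ν))) ^ 2 *
      (if D.IsAffNeg (ν, ⌊(1 - ⟪lam, coroot ν⟫) / c⌋) then 1 else 0)
  else D.ccoef c τ wmin ((wmin lam) lam) (linPart (wmin lam) ν)

/-- The intertwining operator `(𝒥f)(λ) = τ_{w_λ}⁻¹ (I_{w_λ} f)(λ₊)`, where `Iw` assigns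
to each `w_λ` the composite of integral-reflection operators along a reduced word. -/
def Jcal (τ : V × ℤ → R) (wmin : V → Equiv.Perm V)
    (Iw : Equiv.Perm V → (V → R) → V → R) (f : V → R) (x : V) : R :=
  (D.tauw c τ (wmin x))⁻¹ * Iw (wmin x) f ((wmin x) x)

end Ops

/-- The Yang–Yang type Morse function `𝒱_μ`. -/
def morse (t : V → ℝ) (μ ξ : V) : ℝ :=
  (c / 2) * ⟪ξ, ξ⟫ - 2 * Real.pi * ⟪D.rhoVee + μ, ξ⟫ +
    ∑ α ∈ D.pos, (2 / ⟪α, α⟫) * ∫ x in (0:ℝ)..(⟪ξ, α⟫), mvfun (t α) x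

/-- The critical equation `cξ + ∑_{α>0} v_α(⟨ξ,α⟩) α∨ = 2π(ρ∨+μ)`. -/
def criticalEq (t : V → ℝ) (μ ξ : V) : Prop :=
  c • ξ + ∑ α ∈ D.pos, mvfun (t α) ⟪ξ, α⟫ • coroot α
    = (2 * Real.pi) • (D.rhoVee + μ)

/-- The Hessian bilinear form `H_{η,ζ}(ξ)`. -/
def hessForm (t : V → ℝ) (ξ η ζ : V) : ℝ :=
  c * ⟪η, ζ⟫ + ∑ α ∈ D.R0,
    (1 - t α ^ 2) * ⟪η, α⟫ * ⟪ζ, α⟫ /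
      (⟪α, α⟫ * (1 - 2 * t α * Real.cos ⟪ξ, α⟫ + t α ^ 2))

/-- `κ_± = (2/n) ∑_{α>0} (1-t_α²)/(1 ± |t_α|)²`; here `s = ±1`. -/
def kappaPM (t : V → ℝ) (s : ℝ) : ℝ :=
  (2 / (D.n : ℝ)) * ∑ α ∈ D.pos, (1 - t α ^ 2) / (1 + s * |t α|) ^ 2

end RootSystemData

section Helpers

variable {V : Type*} [NormedAddCommGroup V] [InnerProductSpace ℝ V]

theorem h_coroot_neg (α : V) : coroot (-α) = -coroot α := by
  simp [coroot]

theorem h_coroot_coroot (α : V) : coroot (coroot α) = α := by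
  by_cases h : α = 0
  · simp [coroot, h]
  · have h2 : ⟪α, α⟫ ≠ 0 := inner_self_ne_zero.mpr h
    unfold coroot
    rw [inner_smul_left, inner_smul_right, smul_smul]
    simp only [conj_trivial]
    have : 2 / (2 / ⟪α, α⟫ * (2 / ⟪α, α⟫ * ⟪α, α⟫)) * (2 / ⟪α, α⟫) = 1 := by
      field_simp
    rw [this, one_smul]

theorem h_coroot_self {α : V} (h : α ≠ 0) : ⟪α, coroot α⟫ = 2 := by
  have h2 : ⟪α, α⟫ ≠ 0 := inner_self_ne_zero.mpr h
  unfold coroot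
  rw [inner_smul_right]
  field_simp

theorem h_aval_inj {c : ℝ} (hc : 0 < c) {a b : V × ℤ}
    (h : ∀ x, aval c a x = aval c b x) : a = b := by
  have h0 := h 0
  simp only [aval, inner_zero_left, zero_add] at h0
  have h2 : (a.2 : ℝ) = b.2 := mul_right_cancel₀ hc.ne' h0
  have h2' : a.2 = b.2 := by exact_mod_cast h2
  have h1 : coroot a.1 = coroot b.1 := by
    apply ext_inner_left ℝ
    intro x
    have := h x
    simp only [aval, h2] at this
    linarith
  have h1' : a.1 = b.1 := by rw [← h_coroot_coroot a.1, h1, h_coroot_coroot]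
  exact Prod.ext h1' h2'

theorem h_aval_neg (c : ℝ) (a : V × ℤ) (x : V) : aval c (-a.1, -a.2) x = - aval c a x := by
  simp only [aval, h_coroot_neg, inner_neg_right]
  push_cast; ring

theorem h_aval_sAff (c : ℝ) (a b : V × ℤ) (x : V) :
    aval c b (sAff c a x) = aval c b x - aval c a x * ⟪a.1, coroot b.1⟫ := by
  simp only [sAff, aval, inner_sub_left, inner_smul_left]
  simp only [conj_trivial]
  ring

theorem h_aval_sAff_self (c : ℝ) {a : V × ℤ} (h : a.1 ≠ 0) (x : V) :
    aval c a (sAff c a x) = - aval c a x := by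
  rw [h_aval_sAff, h_coroot_self h]; ring

theorem h_sAff_invol (c : ℝ) {a : V × ℤ} (h : a.1 ≠ 0) :
    Function.Involutive (sAff c a) := by
  intro x
  have := h_aval_sAff_self c h x
  unfold sAff at this ⊢
  rw [this]; simp

/-- reflection of affine roots. -/
def hrefl (a b : V × ℤ) : V × ℤ :=
  (b.1 - ⟪b.1, coroot a.1⟫ • a.1, b.2 - a.2 * ⌊⟪a.1, coroot b.1⟫⌋)

theorem h_coroot_refl {α : V} (h : α ≠ 0) (β : V) :
    coroot (β - ⟪β, coroot α⟫ • α) = coroot β - ⟪α, coroot β⟫ • coroot α := by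
  have h2 : ⟪α, α⟫ ≠ 0 := inner_self_ne_zero.mpr h
  have hn : ⟪β - ⟪β, coroot α⟫ • α, β - ⟪β, coroot α⟫ • α⟫ = ⟪β, β⟫ := by
    simp only [coroot, inner_sub_left, inner_sub_right, inner_smul_left, inner_smul_right,
      conj_trivial, real_inner_comm α β]
    field_simp
    ring
  unfold coroot at hn ⊢
  rw [hn]
  simp only [inner_smul_right, smul_sub, smul_smul, real_inner_comm α β]
  congr 2
  ring

namespace RootSystemData

variable (D : RootSystemData V)

theorem h_neg_mem {α : V} (h : α ∈ D.R0) : -α ∈ D.R0 := by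
  have := D.reflect_mem α h α h
  rw [h_coroot_self (D.ne_zero α h)] at this
  convert this using 1
  rw [two_smul]; abel

theorem h_floor {α β : V} (ha : α ∈ D.R0) (hb : β ∈ D.R0) :
    ((⌊⟪β, coroot α⟫⌋ : ℤ) : ℝ) = ⟪β, coroot α⟫ := by
  obtain ⟨k, hk⟩ := D.crystallographic α ha β hb
  rw [hk]; simp

theorem h_aval_refl (c : ℝ) {a b : V × ℤ} (ha : D.IsAffRoot a) (hb : D.IsAffRoot b) (x : V) :
    aval c (hrefl a b) x = aval c b (sAff c a x) := by
  rw [h_aval_sAff]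
  simp only [hrefl, aval]
  rw [h_coroot_refl (D.ne_zero _ ha)]
  push_cast
  rw [D.h_floor hb ha]
  simp only [inner_sub_right, inner_smul_right]
  ring

theorem h_refl_root {a b : V × ℤ} (ha : D.IsAffRoot a) (hb : D.IsAffRoot b) :
    D.IsAffRoot (hrefl a b) := D.reflect_mem _ ha _ hb

theorem h_refl_invol {c : ℝ} (hc : 0 < c) {a b : V × ℤ} (ha : D.IsAffRoot a)
    (hb : D.IsAffRoot b) : hrefl a (hrefl a b) = b := by
  apply h_aval_inj hc
  intro x
  rw [D.h_aval_refl c ha (D.h_refl_root ha hb), D.h_aval_refl c ha hb,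
    h_sAff_invol c (D.ne_zero _ ha)]

theorem h_maps_aux {c : ℝ} {w : Equiv.Perm V} (hw : w ∈ D.WR c) :
    (∀ a, D.IsAffRoot a → ∃ b, D.IsAffRoot b ∧ mapsRoot c w a b) ∧
    (∀ a, D.IsAffRoot a → ∃ b, D.IsAffRoot b ∧ mapsRoot c w⁻¹ a b) := by
  unfold WR at hw
  induction hw using Subgroup.closure_induction with
  | mem e he =>
    obtain ⟨s, hs, hes⟩ := he
    refine ⟨fun a ha => ⟨hrefl s a, D.h_refl_root hs ha, fun x => ?_⟩,
      fun a ha => ⟨hrefl s a, D.h_refl_root hs ha, fun x => ?_⟩⟩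
    · rw [D.h_aval_refl c hs ha]
      congr 1
      rw [Equiv.Perm.inv_eq_iff_eq, hes, h_sAff_invol c (D.ne_zero _ hs)]
    · rw [D.h_aval_refl c hs ha, inv_inv, hes]
  | one => exact ⟨fun a ha => ⟨a, ha, fun x => by simp⟩, fun a ha => ⟨a, ha, fun x => by simp⟩⟩
  | mul u v _ _ hu hv =>
    constructor
    · intro a ha
      obtain ⟨b, hb, hab⟩ := hv.1 a ha
      obtain ⟨d, hd, hbd⟩ := hu.1 b hb
      refine ⟨d, hd, fun x => ?_⟩
      rw [mul_inv_rev, Equiv.Perm.mul_apply, hab, hbd]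
    · intro a ha
      obtain ⟨b, hb, hab⟩ := hu.2 a ha
      obtain ⟨d, hd, hbd⟩ := hv.2 b hb
      refine ⟨d, hd, fun x => ?_⟩
      have h1 := hab (v x)
      have h2 := hbd x
      rw [inv_inv] at h1 h2
      rw [inv_inv, Equiv.Perm.mul_apply, h1, h2]
  | inv u _ hu => exact ⟨hu.2, by rw [inv_inv]; exact hu.1⟩

theorem h_maps {c : ℝ} {w : Equiv.Perm V} (hw : w ∈ D.WR c) :
    ∀ a, D.IsAffRoot a → ∃ b, D.IsAffRoot b ∧ mapsRoot c w a b :=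
  (D.h_maps_aux hw).1

theorem h_exists_p {c : ℝ} (hc : 0 < c) :
    ∃ p : V, ∀ a, D.IsAffPos a → 0 < aval c a p := by
  have : FiniteDimensional ℝ V := by
    apply FiniteDimensional.of_finrank_pos
    rw [D.rank_eq]; exact D.n_pos
  have hspan : ⊤ ≤ Submodule.span ℝ (Set.range D.simpleRoot) := by
    rw [← D.span_top, Submodule.span_le]
    have hpos : ∀ α ∈ D.pos, α ∈ Submodule.span ℝ (Set.range D.simpleRoot) := by
      intro α hα
      obtain ⟨k, hk⟩ := D.pos_natCombo α hα
      rw [hk]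
      exact Submodule.sum_mem _ fun j _ => Submodule.smul_mem _ _
        (Submodule.subset_span ⟨j, rfl⟩)
    intro α hα
    rcases D.pos_or_neg α hα with h | h
    · exact hpos α h
    · have := Submodule.neg_mem _ (hpos _ h)
      simpa using this
  let B := basisOfTopLeSpanOfCardEqFinrank D.simpleRoot hspan (by rw [D.rank_eq]; simp)
  have hB : ∀ j, B j = D.simpleRoot j := fun j => by simp [B]
  let g : V →L[ℝ] ℝ := LinearMap.toContinuousLinearMap (B.constr ℝ (fun _ => (1:ℝ)))
  have hg : ∀ j, g (D.simpleRoot j) = 1 := by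
    intro j
    rw [← hB]
    simp [g]
  let q : V := (InnerProductSpace.toDual ℝ V).symm g
  have hq : ∀ x, ⟪q, x⟫ = g x := fun x => InnerProductSpace.toDual_symm_apply
  have hqpos : ∀ α ∈ D.pos, 0 < ⟪q, coroot α⟫ := by
    intro α hα
    have hne := D.ne_zero α (D.pos_subset hα)
    obtain ⟨k, hk⟩ := D.pos_natCombo α hα
    have h1 : g α = ∑ j, (k j : ℝ) := by
      conv_lhs => rw [hk]
      simp [hg]
    have h2 : 0 < g α := by
      rw [h1]
      have h0 : 0 ≤ ∑ j, (k j : ℝ) := Finset.sum_nonneg fun j _ => by positivity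
      refine lt_of_le_of_ne h0 fun h => hne ?_
      rw [hk]
      refine Finset.sum_eq_zero fun j hj => ?_
      rw [(Finset.sum_eq_zero_iff_of_nonneg (fun j _ => by positivity)).1 h.symm j hj, zero_smul]
    have h3 : 0 < ⟪α, α⟫ := real_inner_self_pos.mpr hne
    unfold coroot
    rw [inner_smul_right, hq]
    positivity
  obtain ⟨M, hM⟩ : ∃ M : ℝ, ∀ α ∈ D.R0, |⟪q, coroot α⟫| ≤ M := by
    obtain ⟨M, hM⟩ := (D.R0.image fun α => |⟪q, coroot α⟫|).bddAbove
    exact ⟨M, fun α hα => hM (by simpa using ⟨α, hα, rfl⟩)⟩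
  have hM0 : 0 ≤ M := (abs_nonneg _).trans (hM _ (D.pos_subset D.hshort_mem))
  refine ⟨(c / (M + 1)) • q, ?_⟩
  have ht : 0 < c / (M + 1) := by positivity
  rintro ⟨α, r⟩ ⟨hα, h⟩
  simp only [aval, inner_smul_left, conj_trivial] at h hα ⊢
  rcases h with h | ⟨h, h'⟩
  · have h1 : (1:ℝ) ≤ r := by exact_mod_cast h
    have h2 := (abs_le.1 (hM α hα)).1
    have h3 : c / (M + 1) * ⟪q, coroot α⟫ ≥ c / (M + 1) * (-M) :=
      mul_le_mul_of_nonneg_left h2 ht.le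
    have h4 : c / (M + 1) * (-M) = - c + c / (M + 1) := by field_simp; ring
    nlinarith
  · rw [h]
    have := mul_pos ht (hqpos α h')
    simpa using this

theorem h_pos_or_neg {a : V × ℤ} (ha : D.IsAffRoot a) : D.IsAffPos a ∨ D.IsAffNeg a := by
  unfold IsAffNeg IsAffPos
  unfold IsAffRoot at ha
  have := D.h_neg_mem ha
  rcases lt_trichotomy a.2 0 with h | h | h
  · right; exact ⟨this, Or.inl (by simp; omega)⟩
  · rcases D.pos_or_neg _ ha with h' | h'
    · left; exact ⟨ha, Or.inr ⟨h, h'⟩⟩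
    · right; exact ⟨this, Or.inr ⟨by simp [h], h'⟩⟩
  · left; exact ⟨ha, Or.inl h⟩

theorem h_neg_root {a : V × ℤ} (ha : D.IsAffNeg a) : D.IsAffRoot a := by
  have := D.h_neg_mem ha.1
  simpa [IsAffRoot] using this

theorem h_neg_val {c : ℝ} {p : V} (hp : ∀ a, D.IsAffPos a → 0 < aval c a p) {a : V × ℤ}
    (ha : D.IsAffNeg a) : aval c a p < 0 := by
  have := hp _ ha
  rw [h_aval_neg] at this; linarith

theorem h_pos_iff {c : ℝ} {p : V} (hp : ∀ a, D.IsAffPos a → 0 < aval c a p) {a : V × ℤ}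
    (ha : D.IsAffRoot a) : D.IsAffPos a ↔ 0 < aval c a p := by
  refine ⟨hp a, fun h => (D.h_pos_or_neg ha).resolve_right fun h' => ?_⟩
  have := D.h_neg_val hp h'
  linarith

theorem h_neg_iff {c : ℝ} {p : V} (hp : ∀ a, D.IsAffPos a → 0 < aval c a p) {a : V × ℤ}
    (ha : D.IsAffRoot a) : D.IsAffNeg a ↔ aval c a p < 0 := by
  refine ⟨D.h_neg_val hp, fun h => (D.h_pos_or_neg ha).resolve_left fun h' => ?_⟩
  have := hp _ h'
  linarith

theorem h_mem_RW {c : ℝ} {p : V} (hp : ∀ a, D.IsAffPos a → 0 < aval c a p)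
    {w : Equiv.Perm V} (hw : w ∈ D.WR c) (a : V × ℤ) :
    a ∈ D.RW c w ↔ D.IsAffRoot a ∧ 0 < aval c a p ∧ aval c a (w⁻¹ p) < 0 := by
  constructor
  · rintro ⟨h, b, hb, hab⟩
    exact ⟨h.1, hp a h, by rw [hab]; exact D.h_neg_val hp hb⟩
  · rintro ⟨h, h1, h2⟩
    obtain ⟨b, hb, hab⟩ := D.h_maps hw a h
    refine ⟨(D.h_pos_iff hp h).2 h1, b, (D.h_neg_iff hp hb).2 ?_, hab⟩
    rw [← hab]; exact h2

theorem h_RW_finite {c : ℝ} (hc : 0 < c) {p : V} (hp : ∀ a, D.IsAffPos a → 0 < aval c a p)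
    {w : Equiv.Perm V} (hw : w ∈ D.WR c) : (D.RW c w).Finite := by
  refine (D.R0.finite_toSet.biUnion fun α _ =>
    (Set.finite_Icc ⌊- ⟪p, coroot α⟫ / c⌋ ⌈- ⟪w⁻¹ p, coroot α⟫ / c⌉).image
      (Prod.mk α)).subset ?_
  rintro ⟨α, r⟩ h
  obtain ⟨h0, h1, h2⟩ := (D.h_mem_RW hp hw _).1 h
  simp only [aval] at h1 h2
  simp only [Set.mem_iUnion]
  refine ⟨α, h0, r, ⟨?_, ?_⟩, rfl⟩
  · have : -⟪p, coroot α⟫ / c ≤ r := by rw [div_le_iff₀ hc]; linarith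
    exact_mod_cast (Int.floor_le _).trans this
  · have : (r : ℝ) ≤ -⟪w⁻¹ p, coroot α⟫ / c := by rw [le_div_iff₀ hc]; linarith
    exact_mod_cast this.trans (Int.le_ceil _)

theorem h_len_lt {c : ℝ} (hc : 0 < c) {w e : Equiv.Perm V} (hw : w ∈ D.WR c)
    {a : V × ℤ} (ha : a ∈ D.RW c w) (he : ∀ x, e x = sAff c a x) (heW : e ∈ D.WR c) :
    D.len c (w * e) < D.len c w := by
  obtain ⟨p, hp⟩ := D.h_exists_p hc
  have hfin := D.h_RW_finite hc hp hw
  obtain ⟨har, hap, haq⟩ := (D.h_mem_RW hp hw _).1 ha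
  have hane := D.ne_zero _ har
  have hweW := mul_mem hw heW
  have hinv : (w * e)⁻¹ p = sAff c a (w⁻¹ p) := by
    rw [mul_inv_rev, Equiv.Perm.mul_apply, Equiv.Perm.inv_eq_iff_eq, he, h_sAff_invol c hane]
  have hmem : ∀ b, b ∈ D.RW c (w * e) ↔
      D.IsAffRoot b ∧ 0 < aval c b p ∧ aval c b (sAff c a (w⁻¹ p)) < 0 := by
    intro b; rw [D.h_mem_RW hp hweW, hinv]
  unfold len
  refine lt_of_le_of_lt ?_ (Set.ncard_sdiff_singleton_lt_of_mem ha hfin)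
  refine Set.ncard_le_ncard_of_injOn
    (fun b => if 0 < aval c (hrefl a b) p then hrefl a b else b) ?_ ?_ (hfin.subset Set.sdiff_subset)
  · intro b hb
    obtain ⟨hb0, hb1, hb2⟩ := (hmem b).1 hb
    have hv := D.h_aval_refl c har hb0
    split_ifs with h
    · refine ⟨(D.h_mem_RW hp hw _).2 ⟨D.h_refl_root har hb0, h, by rw [hv]; exact hb2⟩, ?_⟩
      intro h'
      have h' : hrefl a b = a := h'
      have := D.h_refl_invol hc har hb0
      rw [h'] at this
      have h3 := D.h_aval_refl c har har p
      rw [this, h_aval_sAff_self c hane] at h3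
      linarith
    · rw [hv, h_aval_sAff] at h
      rw [h_aval_sAff] at hb2
      have hk : 0 < ⟪a.1, coroot b.1⟫ := by
        by_contra hk
        push Not at hk
        nlinarith
      refine ⟨(D.h_mem_RW hp hw _).2 ⟨hb0, hb1, by nlinarith⟩, ?_⟩
      intro h'
      have h' : b = a := h'
      subst h'
      rw [← h_aval_sAff, h_aval_sAff_self c hane] at hb2
      linarith
  · intro b1 hb1 b2 hb2 h12
    obtain ⟨r1, p1, q1⟩ := (hmem _).1 hb1
    obtain ⟨r2, p2, q2⟩ := (hmem _).1 hb2
    dsimp only at h12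
    have i1 := D.h_refl_invol hc har r1
    have i2 := D.h_refl_invol hc har r2
    split_ifs at h12 with h1 h2 h2
    · rw [← i1, h12, i2]
    · rw [← h12, i1] at h2; exact absurd p1 h2
    · rw [h12, i2] at h1; exact absurd p2 h1
    · exact h12

theorem h_exists_refl {c : ℝ} {a : V × ℤ} (ha : D.IsAffRoot a) :
    ∃ e ∈ D.WR c, ∀ x, e x = sAff c a x :=
  ⟨(h_sAff_invol c (D.ne_zero _ ha)).toPerm,
    Subgroup.subset_closure ⟨a, ha, fun _ => rfl⟩, fun _ => rfl⟩

theorem h_len_one {c : ℝ} (hc : 0 < c) : D.RW c 1 = ∅ := by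
  obtain ⟨p, hp⟩ := D.h_exists_p hc
  ext a
  rw [D.h_mem_RW hp (one_mem _)]
  simp only [inv_one, Equiv.Perm.one_apply, Set.mem_empty_iff_false, iff_false]
  rintro ⟨_, h1, h2⟩
  linarith

theorem h_wmin_one {c : ℝ} (hc : 0 < c) {wmin : V → Equiv.Perm V} (hw : D.IsWmin c wmin)
    {y : V} (hy : y ∈ D.alcove c) : wmin y = 1 := by
  rcases (hw y).2.2 1 (one_mem _) hy with h | h
  · simp [len, D.h_len_one hc] at h
  · exact h.symm

theorem h_RW_val {c : ℝ} {w : Equiv.Perm V} {a : V × ℤ} (ha : a ∈ D.RW c w) {y : V}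
    (hy : w y ∈ D.alcove c) : aval c a y ≤ 0 := by
  obtain ⟨_, b, hb, hab⟩ := ha
  have h := hab (w y)
  have h2 := hy _ hb
  rw [h_aval_neg] at h2
  simp at h
  linarith

/-- The alcove is a fundamental domain. -/
theorem h_fund {c : ℝ} (hc : 0 < c) {wmin : V → Equiv.Perm V} (hw : D.IsWmin c wmin)
    {y : V} (hy : y ∈ D.alcove c) :
    ∀ (n : ℕ) (w : Equiv.Perm V), w ∈ D.WR c → D.len c w = n → w y ∈ D.alcove c → w y = y := by
  intro n
  induction n using Nat.strong_induction_on with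
  | _ n ih =>
    intro w hwW hn hwy
    rcases (D.RW c w).eq_empty_or_nonempty with h | ⟨a, ha⟩
    · have h1 := D.h_wmin_one hc hw hy
      rcases (hw y).2.2 w hwW hwy with h' | h'
      · simp [len, h] at h'
      · rw [h', h1]; rfl
    · obtain ⟨e, heW, he⟩ := D.h_exists_refl (c := c) ha.1.1
      have hlt := D.h_len_lt hc hwW ha he heW
      have h0 : aval c a y = 0 := le_antisymm (D.h_RW_val ha hwy) (hy a ha.1)
      have hey : e y = y := by rw [he]; simp [sAff, h0]
      have h3 : (w * e) y = w y := by rw [Equiv.Perm.mul_apply, hey]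
      have := ih _ (hn ▸ hlt) (w * e) (mul_mem hwW heW) rfl (by rw [h3]; exact hwy)
      rw [← h3, this]

theorem h_wmin_val {c : ℝ} (hc : 0 < c) {wmin : V → Equiv.Perm V} (hw : D.IsWmin c wmin)
    {y : V} {a : V × ℤ} (ha : a ∈ D.RW c (wmin y)) : aval c a y < 0 := by
  obtain ⟨h1, h2, h3⟩ := hw y
  refine lt_of_le_of_ne (D.h_RW_val ha h2) fun h0 => ?_
  obtain ⟨e, heW, he⟩ := D.h_exists_refl (c := c) ha.1.1
  have hlt := D.h_len_lt hc h1 ha he heW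
  have hey : e y = y := by rw [he]; simp [sAff, h0]
  rcases h3 (wmin y * e) (mul_mem h1 heW) (by rw [Equiv.Perm.mul_apply, hey]; exact h2) with h | h
  · omega
  · rw [h] at hlt; exact lt_irrefl _ hlt

theorem h_fix {c : ℝ} (hc : 0 < c) {wmin : V → Equiv.Perm V} (hw : D.IsWmin c wmin)
    {y : V} (hy : y ∈ D.alcove c) {w : Equiv.Perm V} (hwW : w ∈ D.WR c)
    (h : ∀ a ∈ D.RW c w, aval c a y = 0) : w y = y := by
  refine D.h_fund hc hw hy _ w hwW rfl fun b hb => ?_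
  obtain ⟨a, ha, hba⟩ := D.h_maps (inv_mem hwW) b hb.1
  have hv : aval c b (w y) = aval c a y := by rw [← hba]; simp
  rw [hv]
  rcases D.h_pos_or_neg ha with h' | h'
  · exact hy _ h'
  · have hmem : ((-a.1, -a.2) : V × ℤ) ∈ D.RW c w := by
      refine ⟨h', (-b.1, -b.2), ?_, fun x => ?_⟩
      · simpa [IsAffNeg] using hb
      · rw [h_aval_neg, h_aval_neg, ← hba]; simp
    have := h _ hmem
    rw [h_aval_neg] at this
    linarith

theorem h_W0_props {u : Equiv.Perm V} (hu : u ∈ D.W0) :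
    (∀ x y, ⟪u x, u y⟫ = ⟪x, y⟫) ∧ (∀ α ∈ D.R0, u α ∈ D.R0) ∧ (∀ α ∈ D.R0, u⁻¹ α ∈ D.R0) := by
  unfold W0 at hu
  induction hu using Subgroup.closure_induction with
  | mem e he =>
    obtain ⟨s, hs, hes⟩ := he
    have h2 : ⟪s, s⟫ ≠ 0 := inner_self_ne_zero.mpr (D.ne_zero _ hs)
    refine ⟨fun x y => ?_, fun α hα => ?_, fun α hα => ?_⟩
    · rw [hes, hes]
      simp only [coroot, inner_sub_left, inner_sub_right, inner_smul_left, inner_smul_right,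
        conj_trivial, real_inner_comm s]
      field_simp
      ring
    · rw [hes]; exact D.reflect_mem s hs α hα
    · have : e⁻¹ α = e α := by
        rw [Equiv.Perm.inv_eq_iff_eq, hes, hes, inner_sub_left, inner_smul_left,
          h_coroot_self (D.ne_zero _ hs)]
        simp only [conj_trivial]
        module
      rw [this, hes]; exact D.reflect_mem s hs α hα
  | one => simp
  | mul u v _ _ hu hv =>
    refine ⟨fun x y => ?_, fun α hα => ?_, fun α hα => ?_⟩
    · rw [Equiv.Perm.mul_apply, Equiv.Perm.mul_apply, hu.1, hv.1]
    · exact hu.2.1 _ (hv.2.1 _ hα)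
    · rw [mul_inv_rev]; exact hv.2.2 _ (hu.2.2 _ hα)
  | inv u _ hu =>
    refine ⟨fun x y => ?_, hu.2.2, by simpa using hu.2.1⟩
    rw [← hu.1]; simp

theorem h_lin {c : ℝ} {w : Equiv.Perm V} (hw : w ∈ D.WR c) :
    ∃ u ∈ D.W0, ∀ x y, w x - w y = u (x - y) := by
  unfold WR at hw
  induction hw using Subgroup.closure_induction with
  | mem e he =>
    obtain ⟨s, hs, hes⟩ := he
    refine ⟨(h_sAff_invol c (a := (s.1, (0:ℤ))) (D.ne_zero _ hs)).toPerm,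
      Subgroup.subset_closure ⟨s.1, hs, fun x => ?_⟩, fun x y => ?_⟩
    · simp [sAff, aval]
    · simp only [Function.Involutive.coe_toPerm, hes, sAff, aval, inner_sub_left]
      push_cast
      module
  | one => exact ⟨1, one_mem _, by simp⟩
  | mul u v _ _ hu hv =>
    obtain ⟨u', hu', h1⟩ := hu
    obtain ⟨v', hv', h2⟩ := hv
    refine ⟨u' * v', mul_mem hu' hv', fun x y => ?_⟩
    simp [h1, h2]
  | inv u _ hu =>
    obtain ⟨u', hu', h1⟩ := hu
    refine ⟨u'⁻¹, inv_mem hu', fun x y => ?_⟩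
    rw [eq_comm, Equiv.Perm.inv_eq_iff_eq, ← h1]
    simp

/-- The properties of the orbit of a (quasi-)minuscule weight. -/
theorem h_orb {ω ν : V} (hω : D.IsMinuscule ω ∨ D.IsQuasiMinuscule ω)
    (hν : ∃ w ∈ D.W0, w ω = ν) :
    ν ∈ D.weightLattice ∧ ν ≠ 0 ∧ ∀ α ∈ D.R0, α = ν ∨ ⟪ν, coroot α⟫ ≤ 1 := by
  obtain ⟨u, hu, rfl⟩ := hν
  obtain ⟨h1, h2, h3⟩ := D.h_W0_props hu
  have hnorm : ⟪u ω, u ω⟫ = ⟪ω, ω⟫ := h1 _ _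
  have hcor : ∀ α, ⟪u ω, coroot α⟫ = ⟪ω, coroot (u⁻¹ α)⟫ := by
    intro α
    have e1 : ⟪u⁻¹ α, u⁻¹ α⟫ = ⟪α, α⟫ := by rw [← h1]; simp
    have e2 : ⟪u ω, α⟫ = ⟪ω, u⁻¹ α⟫ := by rw [← h1 ω]; simp
    simp only [coroot, inner_smul_right, e1, e2]
  have hne : ω ≠ 0 → u ω ≠ 0 := fun h h' => h (by
    rw [h', inner_zero_left] at hnorm
    exact inner_self_eq_zero.1 hnorm.symm)
  rcases hω with ⟨w1, w2, w3, w4⟩ | hω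
  · refine ⟨fun α hα => ?_, hne w3, fun α hα => Or.inr ?_⟩
    · rw [hcor]; exact w1 _ (h3 _ hα)
    · rw [hcor]
      rcases D.pos_or_neg _ (h3 _ hα) with h | h
      · exact w4 _ h
      · have := w2 _ h
        rw [h_coroot_neg, inner_neg_right] at this
        linarith
  · unfold IsQuasiMinuscule at hω
    subst hω
    have hm := D.pos_subset D.hshort_mem
    have hr := h2 _ hm
    refine ⟨fun α hα => D.crystallographic α hα _ hr, D.ne_zero _ hr, fun α hα => ?_⟩
    by_contra hcon
    push Not at hcon
    obtain ⟨hn, hgt⟩ := hcon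
    obtain ⟨k, hk⟩ := D.crystallographic α hα _ hr
    have hk2 : (2:ℝ) ≤ ⟪u D.hshort, coroot α⟫ := by
      rw [hk] at hgt ⊢
      have : 1 < k := by exact_mod_cast hgt
      exact_mod_cast this
    have hαpos : 0 < ⟪α, α⟫ := real_inner_self_pos.mpr (D.ne_zero _ hα)
    have hle : ⟪D.hshort, D.hshort⟫ ≤ ⟪α, α⟫ := by
      rw [real_inner_self_eq_norm_sq, real_inner_self_eq_norm_sq]
      exact pow_le_pow_left₀ (norm_nonneg _) (D.hshort_short α hα) 2
    have h5 : ⟪α, α⟫ ≤ ⟪u D.hshort, α⟫ := by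
      simp only [coroot, inner_smul_right] at hk2
      rw [div_mul_eq_mul_div, le_div_iff₀ hαpos] at hk2
      linarith
    have h6 : ⟪α - u D.hshort, α - u D.hshort⟫ ≤ 0 := by
      simp only [inner_sub_left, inner_sub_right, hnorm, real_inner_comm (u D.hshort) α]
      have := real_inner_comm (u D.hshort) α
      linarith
    have h7 : α - u D.hshort = 0 := inner_self_eq_zero.1 (le_antisymm h6 real_inner_self_nonneg)
    exact hn (sub_eq_zero.1 h7)

/-- Either `λ - ν` is a reflection of `λ`, or the shortest element fixes `λ`. -/
theorem h_key {cz : ℤ} (hc : (0:ℝ) < (cz : ℝ)) {wmin : V → Equiv.Perm V}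
    (hw : D.IsWmin (cz : ℝ) wmin) {lam ν : V}
    (hlam : lam ∈ D.weightLattice) (hal : lam ∈ D.alcove (cz : ℝ))
    (hν : ν ≠ 0 ∧ ∀ α ∈ D.R0, α = ν ∨ ⟪ν, coroot α⟫ ≤ 1) :
    ((wmin (lam - ν)) lam = lam ∧ (wmin (lam - ν)) (lam - ν) ≠ lam) ∨
    ((wmin (lam - ν)) lam ≠ lam ∧ (wmin (lam - ν)) (lam - ν) = lam ∧
      ∃ r : ℤ, ⟪lam, coroot ν⟫ + r * cz = 1) := by
  by_cases h : ∀ a ∈ D.RW (cz : ℝ) (wmin (lam - ν)), aval (cz : ℝ) a lam = 0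
  · left
    have h1 := D.h_fix hc hw hal (hw (lam - ν)).1 h
    refine ⟨h1, fun h2 => hν.1 ?_⟩
    have := (wmin (lam - ν)).injective (h1.trans h2.symm)
    simpa using this.symm
  · right
    push Not at h
    obtain ⟨a, ha, hne⟩ := h
    have hneg := D.h_wmin_val hc hw ha
    have h0 := hal a ha.1
    obtain ⟨k, hk⟩ := hlam a.1 ha.1.1
    have hint : aval (cz : ℝ) a lam = ((k + a.2 * cz : ℤ) : ℝ) := by
      simp only [aval, hk]; push_cast; ring
    have h1 : 1 ≤ aval (cz : ℝ) a lam := by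
      have : 0 < aval (cz : ℝ) a lam := lt_of_le_of_ne h0 (Ne.symm hne)
      rw [hint] at this ⊢
      have : 0 < k + a.2 * cz := by exact_mod_cast this
      exact_mod_cast this
    have hdiff : aval (cz : ℝ) a (lam - ν) = aval (cz : ℝ) a lam - ⟪ν, coroot a.1⟫ := by
      simp only [aval, inner_sub_left]; ring
    rcases hν.2 a.1 ha.1.1 with hα | hα
    · have h2 : ⟪ν, coroot a.1⟫ = 2 := by rw [← hα]; exact h_coroot_self (D.ne_zero _ ha.1.1)
      have h3 : aval (cz : ℝ) a lam = 1 := by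
        refine le_antisymm ?_ h1
        have : aval (cz : ℝ) a lam < 2 := by linarith
        rw [hint] at this ⊢
        have : k + a.2 * cz < 2 := by exact_mod_cast this
        have : k + a.2 * cz ≤ 1 := by omega
        exact_mod_cast this
      obtain ⟨e, heW, he⟩ := D.h_exists_refl (c := (cz : ℝ)) ha.1.1
      have hel : e lam = lam - ν := by rw [he, sAff, h3, one_smul, hα]
      have hplus : (wmin (lam - ν)) (lam - ν) = lam := by
        have hm : wmin (lam - ν) * e ∈ D.WR (cz : ℝ) := mul_mem (hw _).1 heW
        have hv : (wmin (lam - ν) * e) lam = (wmin (lam - ν)) (lam - ν) := by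
          rw [Equiv.Perm.mul_apply, hel]
        rw [← hv]
        exact D.h_fund hc hw hal _ _ hm rfl (by rw [hv]; exact (hw _).2.1)
      refine ⟨fun h5 => hν.1 ?_, hplus, a.2, ?_⟩
      · have := (wmin (lam - ν)).injective (h5.trans hplus.symm)
        simpa using this.symm
      · rw [← hα]; exact h3
    · linarith

end RootSystemData

end Helpers

open RootSystemData in
/-- the restriction of the discrete Laplacian `L_ω` (for `ω` minuscule or
quasi-minuscule) to `W_R`-invariant functions, evaluated at `λ ∈ P_c⁺`, takes the form
`U_{λ,ω} f(λ) + ∑_{ν ∈ W₀ω, λ-ν ∈ P_c⁺} V_{λ,ν} f(λ-ν)` with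
`V_{λ,ν} = ∑_{μ ∈ W_{R,λ}(λ-ν)} τ_{w_μ}²` and
`U_{λ,ω} = ∑_{(λ-ν)₊=λ} τ_{w_{λ-ν}}² + (1-τ₀⁻²) ∑_{w_{λ-ν}λ=λ} c_{λ,ν}`. -/
theorem statement8 {V : Type*} [NormedAddCommGroup V] [InnerProductSpace ℝ V]
    (D : RootSystemData V) (cz : ℤ) (hc : 1 < cz)
    (τ : V × ℤ → ℂ) (hτ : D.IsMultiplicity (cz : ℝ) τ)
    (wmin : V → Equiv.Perm V) (hwmin : D.IsWmin (cz : ℝ) wmin)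
    (ω : V) (hω : D.IsMinuscule ω ∨ D.IsQuasiMinuscule ω)
    (orb : Finset V) (horb : ∀ ν : V, ν ∈ orb ↔ ∃ w ∈ D.W0, w ω = ν)
    (f : V → ℂ) (hf : ∀ w ∈ D.WR (cz : ℝ), ∀ lam : V, f (w lam) = f lam)
    (lam : V) (hlam : lam ∈ D.weightLattice ∩ D.alcove (cz : ℝ))
    (Orb : V → Finset V)
    (hOrb : ∀ ν μ : V, μ ∈ Orb ν ↔ ∃ w ∈ D.WR (cz : ℝ), w lam = lam ∧ w (lam - ν) = μ) :
    ∑ ν ∈ orb,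
        (D.acoef (cz : ℝ) τ wmin lam ν * f (lam - ν)
          + D.bcoef (cz : ℝ) τ wmin lam ν * (1 - (D.tauZero τ)⁻¹ ^ 2) * f lam)
      = ((∑ ν ∈ orb.filter fun ν => (wmin (lam - ν)) (lam - ν) = lam,
            D.tauw (cz : ℝ) τ (wmin (lam - ν)) ^ 2)
          + (1 - (D.tauZero τ)⁻¹ ^ 2) *
            ∑ ν ∈ orb.filter fun ν => (wmin (lam - ν)) lam = lam,
              D.ccoef (cz : ℝ) τ wmin lam ν) * f lam
        + ∑ ν ∈ orb.filter fun ν => lam - ν ∈ D.weightLattice ∩ D.alcove (cz : ℝ),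
            (∑ μ ∈ Orb ν, D.tauw (cz : ℝ) τ (wmin μ) ^ 2) * f (lam - ν) := by
  have hc0 : (0:ℝ) < (cz : ℝ) := by
    have : 0 < cz := by omega
    exact_mod_cast this
  obtain ⟨hlP, hlA⟩ := hlam
  have hone : wmin lam = 1 := D.h_wmin_one hc0 hwmin hlA
  have htau1 : D.tauw (cz : ℝ) τ 1 = 1 := by
    simp [tauw, D.h_len_one hc0]
  have hprop := fun ν (h : ν ∈ orb) => D.h_orb hω ((horb ν).1 h)
  have hkey := fun ν (h : ν ∈ orb) => D.h_key hc0 hwmin hlP hlA (hprop ν h).2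
  have ha : ∀ ν, D.acoef (cz : ℝ) τ wmin lam ν = D.tauw (cz : ℝ) τ (wmin (lam - ν)) ^ 2 := by
    intro ν
    simp [acoef, hone, htau1, sq]
  have hb : ∀ ν ∈ orb, D.bcoef (cz : ℝ) τ wmin lam ν =
      if (wmin (lam - ν)) lam = lam then D.ccoef (cz : ℝ) τ wmin lam ν else 0 := by
    intro ν hν
    unfold bcoef
    rcases hkey ν hν with ⟨h1, h2⟩ | ⟨h1, h2, r, hr⟩
    · have h2' : ¬ ((wmin (lam - ν)) (lam - ν) = (wmin lam) lam) := by rw [hone]; exact h2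
      rw [if_neg h2', if_pos h1]
      simp [hone, linPart]
    · have h2' : (wmin (lam - ν)) (lam - ν) = (wmin lam) lam := by rw [hone]; exact h2
      rw [if_pos h2', if_neg h1]
      have hfl : ⌊(1 - ⟪lam, coroot ν⟫) / (cz : ℝ)⌋ = r := by
        have : (1 - ⟪lam, coroot ν⟫) / (cz : ℝ) = r := by
          rw [div_eq_iff hc0.ne']; linarith
        rw [this]; simp
      rw [hfl, if_neg, mul_zero]
      intro hneg
      have := hlA _ hneg
      rw [h_aval_neg] at this
      simp only [aval, hr] at this
      linarith
  have hLHS : ∀ ν ∈ orb, (D.acoef (cz : ℝ) τ wmin lam ν * f (lam - ν)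
          + D.bcoef (cz : ℝ) τ wmin lam ν * (1 - (D.tauZero τ)⁻¹ ^ 2) * f lam)
      = (if (wmin (lam - ν)) (lam - ν) = lam then
            D.tauw (cz : ℝ) τ (wmin (lam - ν)) ^ 2 * f lam else 0)
        + (if (wmin (lam - ν)) lam = lam then
            (1 - (D.tauZero τ)⁻¹ ^ 2) * D.ccoef (cz : ℝ) τ wmin lam ν * f lam else 0)
        + (if (wmin (lam - ν)) lam = lam then
            D.tauw (cz : ℝ) τ (wmin (lam - ν)) ^ 2 * f (lam - ν) else 0) := by
    intro ν hν
    rw [ha, hb ν hν]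
    rcases hkey ν hν with ⟨h1, h2⟩ | ⟨h1, h2, -⟩
    · rw [if_pos h1, if_neg h2, if_pos h1, if_pos h1]; ring
    · rw [if_neg h1, if_pos h2, if_neg h1, if_neg h1]
      have : f (lam - ν) = f lam := by
        rw [← hf _ (hwmin (lam - ν)).1 (lam - ν), h2]
      rw [this]; ring
  rw [Finset.sum_congr rfl hLHS, Finset.sum_add_distrib, Finset.sum_add_distrib,
    ← Finset.sum_filter, ← Finset.sum_filter, ← Finset.sum_filter, add_mul, Finset.sum_mul,
    Finset.mul_sum, Finset.sum_mul]
  congr 1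
  -- stability of the orbit
  have hstab : ∀ w ∈ D.WR (cz : ℝ), w lam = lam → ∀ ν ∈ orb, lam - w (lam - ν) ∈ orb := by
    intro w hw hwl ν hν
    obtain ⟨u, hu, huw⟩ := D.h_lin hw
    have h := huw lam (lam - ν)
    rw [hwl, sub_sub_cancel] at h
    rw [h]
    obtain ⟨v, hv, hvω⟩ := (horb ν).1 hν
    exact (horb _).2 ⟨u * v, mul_mem hu hv, by rw [Equiv.Perm.mul_apply, hvω]⟩
  have hmaps : ∀ ν ∈ orb.filter (fun ν => (wmin (lam - ν)) lam = lam),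
      lam - (wmin (lam - ν)) (lam - ν) ∈
        orb.filter fun ν => lam - ν ∈ D.weightLattice ∩ D.alcove (cz : ℝ) := by
    intro ν hν
    obtain ⟨hν, h1⟩ := Finset.mem_filter.1 hν
    have hm := hstab _ (hwmin (lam - ν)).1 h1 ν hν
    refine Finset.mem_filter.2 ⟨hm, fun α hα => ?_, ?_⟩
    · obtain ⟨k, hk⟩ := hlP α hα
      obtain ⟨k', hk'⟩ := (hprop _ hm).1 α hα
      exact ⟨k - k', by rw [inner_sub_left, hk, hk']; push_cast; ring⟩
    · rw [sub_sub_cancel]; exact (hwmin _).2.1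
  rw [← Finset.sum_fiberwise_of_maps_to hmaps]
  refine Finset.sum_congr rfl fun ν0 hν0 => ?_
  obtain ⟨hν0o, -, hν0A⟩ := Finset.mem_filter.1 hν0
  rw [Finset.sum_mul]
  refine Finset.sum_bij' (fun ν _ => lam - ν) (fun μ _ => lam - μ) ?_ ?_ ?_ ?_ ?_
  · intro ν hν
    obtain ⟨hν, h2⟩ := Finset.mem_filter.1 hν
    obtain ⟨hν, h1⟩ := Finset.mem_filter.1 hν
    refine (hOrb _ _).2 ⟨(wmin (lam - ν))⁻¹, inv_mem (hwmin _).1, ?_, ?_⟩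
    · rw [Equiv.Perm.inv_eq_iff_eq, h1]
    · rw [Equiv.Perm.inv_eq_iff_eq, ← h2, sub_sub_cancel]
  · intro μ hμ
    obtain ⟨w, hw, hwl, rfl⟩ := (hOrb _ _).1 hμ
    have hm := hstab w hw hwl ν0 hν0o
    have hplus : (wmin (w (lam - ν0))) (w (lam - ν0)) = lam - ν0 := by
      have := D.h_fund hc0 hwmin hν0A _ (wmin (w (lam - ν0)) * w) (mul_mem (hwmin _).1 hw) rfl
        (hwmin (w (lam - ν0))).2.1
      exact this
    simp only [Finset.mem_filter, sub_sub_cancel]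
    refine ⟨⟨hm, ?_⟩, by rw [hplus, sub_sub_cancel]⟩
    rcases hkey _ hm with ⟨h1, _⟩ | ⟨_, h2, _⟩
    · simpa only [sub_sub_cancel] using h1
    · rw [sub_sub_cancel, hplus] at h2
      exact absurd (by simpa using h2) (hprop _ hν0o).2.1
  · intro ν _; simp
  · intro μ _; simp
  · intro ν hν
    obtain ⟨hν, h2⟩ := Finset.mem_filter.1 hν
    have h3 : lam - ν0 = (wmin (lam - ν)) (lam - ν) := by rw [← h2, sub_sub_cancel]
    rw [h3, hf _ (hwmin _).1]
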